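/- arXiv:1602.04385 — 4 statements merged into one kernel-verified Lean document; each statement's English description precedes it below -/
import Mathlib

section
/- Let X_r, X_{r+1}, Y, Y′ be real vector spaces, b : Y × X_r → ℝ and b′ : Y′ × X_{r+1} → ℝ bilinear maps, d : X_r → X_{r+1} and d_Y : Y′ → Y linear maps, and ε ∈ {−1, 1} a sign such that the integration-by-parts identity b(d_Y α, x) = ε · b′(α, d x) holds for all α ∈ Y′ and x ∈ X_r. Let W_r ⊆ X_r and W_{r+1} ⊆ X_{r+1} be finite-dimensional subspaces with d(W_r) ⊆ W_{r+1}, and let M ⊆ Y and M′ ⊆ Y′ be finite-dimensional subspaces with d_Y(M′) ⊆ M, dim M = dim W_r, dim M′ = dim W_{r+1}, such that b is nondegenerate on M × W_r and b′ is nondegenerate on M′ × W_{r+1}. Let Q_r : X_r → W_r be the projection-based coupling operator determined by b and M, and Q_{r+1} : X_{r+1} → W_{r+1} the one determined by b′ and M′. Then d ∘ Q_r = Q_{r+1} ∘ d on X_r. -/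
/-- Commuting property of projection-based mesh coupling operators: if the
Lagrange multiplier spaces form a complex (`dY(M') ⊆ M`) and integration by
parts holds (`b (dY α) x = ε * b' α (d x)`), then the coupling operators
commute with the exterior derivative: `d ∘ Q_r = Q_{r+1} ∘ d`. -/
theorem coupling_operators_commute_with_exterior_derivative
    {Xr Xr1 Y Y' : Type*}
    [AddCommGroup Xr] [Module ℝ Xr] [AddCommGroup Xr1] [Module ℝ Xr1]
    [AddCommGroup Y] [Module ℝ Y] [AddCommGroup Y'] [Module ℝ Y']
    (b : Y →ₗ[ℝ] Xr →ₗ[ℝ] ℝ) (b' : Y' →ₗ[ℝ] Xr1 →ₗ[ℝ] ℝ)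
    (d : Xr →ₗ[ℝ] Xr1) (dY : Y' →ₗ[ℝ] Y)
    (ε : ℝ) (hε : ε = 1 ∨ ε = -1)
    (hibp : ∀ (α : Y') (x : Xr), b (dY α) x = ε * b' α (d x))
    (Wr : Submodule ℝ Xr) (Wr1 : Submodule ℝ Xr1)
    (hdW : Wr.map d ≤ Wr1)
    (M : Submodule ℝ Y) (M' : Submodule ℝ Y')
    (hdM : M'.map dY ≤ M)
    [FiniteDimensional ℝ Wr] [FiniteDimensional ℝ Wr1]
    [FiniteDimensional ℝ M] [FiniteDimensional ℝ M']
    (hdim : Module.finrank ℝ M = Module.finrank ℝ Wr)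
    (hdim' : Module.finrank ℝ M' = Module.finrank ℝ Wr1)
    (hnd : ∀ w ∈ Wr, (∀ β ∈ M, b β w = 0) → w = 0)
    (hnd' : ∀ w ∈ Wr1, (∀ α ∈ M', b' α w = 0) → w = 0)
    (Qr : Xr →ₗ[ℝ] Xr)
    (hQrW : ∀ x, Qr x ∈ Wr)
    (hQr : ∀ x, ∀ β ∈ M, b β (Qr x) = b β x)
    (Qr1 : Xr1 →ₗ[ℝ] Xr1)
    (hQr1W : ∀ x, Qr1 x ∈ Wr1)
    (hQr1 : ∀ x, ∀ α ∈ M', b' α (Qr1 x) = b' α x) :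
    ∀ x : Xr, d (Qr x) = Qr1 (d x) := by
  intro x
  -- Both sides lie in `Wr1`, so by nondegeneracy it suffices to test the difference against `M'`.
  refine sub_eq_zero.mp (hnd' _ (Wr1.sub_mem (hdW ⟨_, hQrW x, rfl⟩) (hQr1W _)) fun α hα => ?_)
  have hε0 : ε ≠ 0 := by rcases hε with rfl | rfl <;> norm_num
  -- `dY α ∈ M` is an admissible multiplier for `Qr`; integrate by parts on both sides.
  have h := hQr x (dY α) (hdM ⟨α, hα, rfl⟩)
  rw [hibp, hibp] at h
  rw [map_sub, hQr1 _ α hα, mul_left_cancel₀ hε0 h, sub_self]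
end

section
/- Let X and Y be real normed vector spaces, b : Y × X → ℝ a bilinear map that is continuous with constant C₂ > 0, i.e., |b(β, x)| ≤ C₂ ‖β‖ ‖x‖ for all β ∈ Y, x ∈ X. Let W ⊆ X and M ⊆ Y be finite-dimensional subspaces with dim M = dim W satisfying the discrete inf-sup condition with constant C₁ > 0: for every w ∈ W there exists β ∈ M, β ≠ 0, with b(β, w) ≥ (1/C₁) ‖β‖ ‖w‖. Then b is nondegenerate on M × W, so the projection-based coupling operator Q : X → W exists, and it is bounded with ‖Q x‖ ≤ C₁ C₂ ‖x‖ for all x ∈ X. -/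
/-!
The inf-sup condition makes the map `S : W → M*`, `w ↦ b(·, w)`, injective, and since
`dim W = dim M = dim M*` it is an isomorphism. The coupling operator is `Q = S⁻¹ ∘ T` with
`T : X → M*`, `x ↦ b(·, x)`. For the bound, apply the inf-sup condition to `Q x`: for some nonzero
`β ∈ M`, `‖β‖ ‖Q x‖ ≤ C₁ b(β, Q x) = C₁ b(β, x) ≤ C₁ C₂ ‖β‖ ‖x‖`.
-/

/-- Inf-sup stability and continuity imply nondegeneracy of the pairing on
`M × W`, hence existence of the projection-based coupling operator `Q`, which
is bounded with `‖Q x‖ ≤ C₁ C₂ ‖x‖`. -/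
theorem coupling_operator_bounded_of_infsup
    {X Y : Type*} [NormedAddCommGroup X] [NormedSpace ℝ X]
    [NormedAddCommGroup Y] [NormedSpace ℝ Y]
    (b : Y →ₗ[ℝ] X →ₗ[ℝ] ℝ)
    (C₁ C₂ : ℝ) (hC₁ : 0 < C₁) (hC₂ : 0 < C₂)
    (hcont : ∀ (β : Y) (x : X), |b β x| ≤ C₂ * ‖β‖ * ‖x‖)
    (W : Submodule ℝ X) (M : Submodule ℝ Y)
    [FiniteDimensional ℝ W] [FiniteDimensional ℝ M]
    (hdim : Module.finrank ℝ M = Module.finrank ℝ W)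
    (hinfsup : ∀ w ∈ W, ∃ β ∈ M, β ≠ 0 ∧ (1 / C₁) * (‖β‖ * ‖w‖) ≤ b β w) :
    (∀ w ∈ W, (∀ β ∈ M, b β w = 0) → w = 0) ∧
    ∃ Q : X →ₗ[ℝ] X,
      (∀ x, Q x ∈ W) ∧
      (∀ x, ∀ β ∈ M, b β (Q x) = b β x) ∧
      (∀ x, ‖Q x‖ ≤ C₁ * C₂ * ‖x‖) := by
  have hnd : ∀ w ∈ W, (∀ β ∈ M, b β w = 0) → w = 0 := by
    intro w hw h
    obtain ⟨β, hβ, hβ0, hle⟩ := hinfsup w hw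
    rw [h β hβ] at hle
    by_contra hw0
    have h1 : 0 < ‖β‖ := norm_pos_iff.mpr hβ0
    have h2 : 0 < ‖w‖ := norm_pos_iff.mpr hw0
    have : 0 < (1 / C₁) * (‖β‖ * ‖w‖) := by positivity
    linarith
  refine ⟨hnd, ?_⟩
  let T : X →ₗ[ℝ] Module.Dual ℝ M := (b.comp M.subtype).flip
  let S : W →ₗ[ℝ] Module.Dual ℝ M := T.comp W.subtype
  have hS : Function.Injective S := by
    rw [injective_iff_map_eq_zero]
    intro w hw
    exact Subtype.ext (hnd w w.2 fun β hβ => LinearMap.congr_fun hw ⟨β, hβ⟩)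
  have hd : Module.finrank ℝ W = Module.finrank ℝ (Module.Dual ℝ M) := by
    rw [Subspace.dual_finrank_eq, hdim]
  let e := LinearMap.linearEquivOfInjective S hS hd
  have hQ : ∀ x, ∀ β ∈ M, b β (e.symm (T x) : X) = b β x := fun x β hβ =>
    LinearMap.congr_fun (e.apply_symm_apply (T x)) ⟨β, hβ⟩
  refine ⟨W.subtype ∘ₗ e.symm.toLinearMap ∘ₗ T, fun x => (e.symm (T x)).2, hQ, fun x => ?_⟩
  change ‖(e.symm (T x) : X)‖ ≤ _
  obtain ⟨β, hβ, hβ0, hle⟩ := hinfsup _ (e.symm (T x)).2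
  rw [hQ x β hβ] at hle
  have h1 : 0 < ‖β‖ := norm_pos_iff.mpr hβ0
  have h2 := hle.trans ((le_abs_self _).trans (hcont β x))
  rw [one_div, inv_mul_le_iff₀ hC₁] at h2
  -- The factor `‖β‖ > 0` cancels from both sides.
  refine le_of_mul_le_mul_left ?_ h1
  linarith
end

section
/- Let X and Y be real normed vector spaces, b : Y × X → ℝ a bilinear map that is continuous with constant C₂ > 0, i.e., |b(β, x)| ≤ C₂ ‖β‖ ‖x‖ for all β ∈ Y, x ∈ X. Let W ⊆ X and M ⊆ Y be finite-dimensional subspaces with dim M = dim W satisfying the discrete inf-sup condition with constant C₁ > 0: for every w ∈ W there exists β ∈ M, β ≠ 0, with b(β, w) ≥ (1/C₁) ‖β‖ ‖w‖. Let Q : X → W be the projection-based coupling operator. Then the projection error is bounded by the best approximation error: for every x ∈ X, ‖Q x − x‖ ≤ (1 + C₁ C₂) · inf_{η ∈ W} ‖x − η‖. -/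
/-- Quasi-optimal projection: under inf-sup stability and continuity of the
pairing, the projection error of the coupling operator is bounded by the best
approximation error, `‖Q x − x‖ ≤ (1 + C₁ C₂) inf_{η ∈ W} ‖x − η‖`. -/
theorem coupling_operator_quasi_optimal
    {X Y : Type*} [NormedAddCommGroup X] [NormedSpace ℝ X]
    [NormedAddCommGroup Y] [NormedSpace ℝ Y]
    (b : Y →ₗ[ℝ] X →ₗ[ℝ] ℝ)
    (C₁ C₂ : ℝ) (hC₁ : 0 < C₁) (hC₂ : 0 < C₂)
    (hcont : ∀ (β : Y) (x : X), |b β x| ≤ C₂ * ‖β‖ * ‖x‖)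
    (W : Submodule ℝ X) (M : Submodule ℝ Y)
    [FiniteDimensional ℝ W] [FiniteDimensional ℝ M]
    (hdim : Module.finrank ℝ M = Module.finrank ℝ W)
    (hinfsup : ∀ w ∈ W, ∃ β ∈ M, β ≠ 0 ∧ (1 / C₁) * (‖β‖ * ‖w‖) ≤ b β w)
    (Q : X →ₗ[ℝ] X)
    (hQW : ∀ x, Q x ∈ W)
    (hQ : ∀ x, ∀ β ∈ M, b β (Q x) = b β x) :
    ∀ x : X, ‖Q x - x‖ ≤ (1 + C₁ * C₂) * ⨅ η : W, ‖x - (η : X)‖ := by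
  intro x
  rw [Real.mul_iInf_of_nonneg (by positivity)]
  refine le_ciInf fun η => ?_
  -- The inf-sup condition at `Q x - η ∈ W`, combined with `b β (Q x - η) = b β (x - η)`,
  -- gives `‖Q x - η‖ ≤ C₁ C₂ ‖x - η‖`; the triangle inequality through `η` then concludes.
  obtain ⟨β, hβM, hβ0, hβ⟩ := hinfsup (Q x - η) (W.sub_mem (hQW x) η.2)
  have hβpos : 0 < ‖β‖ := norm_pos_iff.mpr hβ0
  have hpair : b β (Q x - η) = b β (x - η) := by
    rw [map_sub, map_sub, hQ x β hβM]
  have hscaled : ‖β‖ * ((1 / C₁) * ‖Q x - η‖) ≤ ‖β‖ * (C₂ * ‖x - η‖) := by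
    have hbound := (le_abs_self _).trans (hcont β (x - η))
    rw [hpair] at hβ
    linarith
  have hstable : ‖Q x - η‖ ≤ C₁ * (C₂ * ‖x - η‖) := by
    have h := le_of_mul_le_mul_left hscaled hβpos
    rwa [one_div, inv_mul_le_iff₀ hC₁] at h
  have htri : ‖Q x - x‖ ≤ ‖Q x - η‖ + ‖x - η‖ := by
    rw [norm_sub_rev x]
    exact norm_sub_le_norm_sub_add_norm_sub _ _ _
  linarith
end

section
/- Let V⁰ and V¹ be real vector spaces and d : V⁰ → V¹ a linear map whose kernel is the one-dimensional span of a fixed element 𝟙 ∈ V⁰. Let T and S be finite index sets, D : S × T → ℝ a matrix with Σ_{t ∈ T} D_{st} = 0 for every s ∈ S, and (μ⁰_t)_{t ∈ T}, (μ¹_s)_{s ∈ S} families in V⁰ and V¹ with d μ⁰_t = − Σ_{s ∈ S} D_{st} μ¹_s for all t ∈ T. Assume further that there exist t₀ ∈ T and a linear functional ℓ on V⁰ with ℓ(μ⁰_t) = δ_{t t₀} for all t ∈ T and ℓ(𝟙) = 1. Then Σ_{t ∈ T} μ⁰_t = 𝟙; in particular d(Σ_{t ∈ T} μ⁰_t)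 = 0. -/
/-- Partition of Unity for the Buffa-Christiansen 0-forms on a connected
interface without boundary: if the rows of the edge-facet incidence matrix sum
to zero, the kernel of the surface gradient is spanned by the constant
function, and one de Rham degree of freedom normalizes the family, then
`Σ_t μ⁰_t = 𝟙`; in particular `d (Σ_t μ⁰_t) = 0`. -/
theorem BC_partition_of_unity
    {V0 V1 : Type*}
    [AddCommGroup V0] [Module ℝ V0] [AddCommGroup V1] [Module ℝ V1]
    (d : V0 →ₗ[ℝ] V1) (one : V0) (hone_ne : one ≠ 0)
    (hker : LinearMap.ker d = Submodule.span ℝ {one})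
    {T S : Type*} [Fintype T] [Fintype S] [DecidableEq T]
    (D : S → T → ℝ) (hD : ∀ s, ∑ t, D s t = 0)
    (μ0 : T → V0) (μ1 : S → V1)
    (hd : ∀ t, d (μ0 t) = -∑ s, D s t • μ1 s)
    (t₀ : T) (ell : V0 →ₗ[ℝ] ℝ)
    (hell : ∀ t, ell (μ0 t) = if t = t₀ then 1 else 0)
    (hone : ell one = 1) :
    (∑ t, μ0 t) = one ∧ d (∑ t, μ0 t) = 0 := by
  have hd0 : d (∑ t, μ0 t) = 0 := by
    simp only [map_sum, hd, Finset.sum_neg_distrib]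
    rw [Finset.sum_comm]
    simp [← Finset.sum_smul, hD]
  refine ⟨?_, hd0⟩
  have hmem : (∑ t, μ0 t) ∈ Submodule.span ℝ {one} := hker ▸ LinearMap.mem_ker.mpr hd0
  obtain ⟨c, hc⟩ := Submodule.mem_span_singleton.mp hmem
  -- Evaluating `ell` on both sides of `c • one = ∑ t, μ0 t` determines the constant.
  have hc1 : c = 1 := by
    have h := congrArg ell hc
    simpa [hell, hone] using h
  rw [← hc, hc1, one_smul]
end
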